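/- In any generalized open maps situation in which the category 𝕄 has pullbacks, (𝔼,𝕊)-bisimilarity is an equivalence relation on the objects of 𝕄: it is reflexive (every identity morphism is (𝔼,𝕊)-open), symmetric, and transitive. -/

import Mathlib

/-! Open maps contain the identities (lift `y` itself along `s = 𝟙`), are closed under
composition (lift through the second map, then through the first), and are stable under
pullback (a generalized lifting for `f` pairs with `J_𝕊 s ≫ y` to give one for its base
change). Transitivity of bisimilarity then follows by composing two spans through the pullback
over their common object; reflexivity uses the identity span, and symmetry swaps the legs. -/

open CategoryTheory

/-- A generalized open maps situation over a category `M` and an object assignment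
`J : V → M`: a small category with set of objects `V` together with the action on
morphisms of a functor into `M` that acts as `J` on objects.  A pair of such data
`(𝔼, 𝕊)` (on the same `V` and `J`) is exactly a generalized open maps situation. -/
structure PathCat (V : Type*) {M : Type*} [Category M] (J : V → M) where
  Hom : V → V → Type*
  id : ∀ v, Hom v v
  comp : ∀ {u v w : V}, Hom u v → Hom v w → Hom u w
  id_comp : ∀ {v w : V} (f : Hom v w), comp (id v) f = f
  comp_id : ∀ {v w : V} (f : Hom v w), comp f (id w) = f
  assoc : ∀ {a b c d : V} (f : Hom a b) (g : Hom b c) (h : Hom c d),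
    comp (comp f g) h = comp f (comp g h)
  map : ∀ {v w : V}, Hom v w → (J v ⟶ J w)
  map_id : ∀ v, map (id v) = 𝟙 (J v)
  map_comp : ∀ {u v w : V} (f : Hom u v) (g : Hom v w), map (comp f g) = map f ≫ map g

/-- `f : X ⟶ Y` is `(𝔼,𝕊)`-open: every commutative square `J_𝔼 e ≫ y = x ≫ f`
(with `e : v ⟶ w` in `𝔼`) admits a generalized lifting `e' : v ⟶ u` in `𝔼`,
`s : u ⟶ w` in `𝕊`, `x' : J u ⟶ X` with `J_𝔼 e' ≫ x' = x`, `J_𝔼 e' ≫ J_𝕊 s = J_𝔼 e`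
and `x' ≫ f = J_𝕊 s ≫ y`. -/
def PathCat.IsOpen {V : Type*} {M : Type*} [Category M] {J : V → M}
    (E S : PathCat V J) {X Y : M} (f : X ⟶ Y) : Prop :=
  ∀ ⦃v w : V⦄ (e : E.Hom v w) (x : J v ⟶ X) (y : J w ⟶ Y),
    E.map e ≫ y = x ≫ f →
    ∃ (u : V) (e' : E.Hom v u) (s : S.Hom u w) (x' : J u ⟶ X),
      E.map e' ≫ x' = x ∧ E.map e' ≫ S.map s = E.map e ∧ x' ≫ f = S.map s ≫ y

/-- Two objects are `(𝔼,𝕊)`-bisimilar if there is a span of `(𝔼,𝕊)`-open maps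
between them. -/
def PathCat.Bisimilar {V : Type*} {M : Type*} [Category M] {J : V → M}
    (E S : PathCat V J) (X Y : M) : Prop :=
  ∃ (Z : M) (f : Z ⟶ X) (g : Z ⟶ Y), E.IsOpen S f ∧ E.IsOpen S g

theorem PathCat.isOpen_id {V : Type*} {M : Type*} [Category M] {J : V → M}
    (E S : PathCat V J) (X : M) : E.IsOpen S (𝟙 X) := by
  intro v w e x y h
  exact ⟨w, e, S.id w, y, by simpa using h, by simp [S.map_id], by simp [S.map_id]⟩

theorem PathCat.IsOpen.comp {V : Type*} {M : Type*} [Category M] {J : V → M}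
    {E S : PathCat V J} {X Y Z : M} {f : X ⟶ Y} {g : Y ⟶ Z}
    (hf : E.IsOpen S f) (hg : E.IsOpen S g) : E.IsOpen S (f ≫ g) := by
  intro v w e x y h
  obtain ⟨u, e₁, s₁, y', h₁, h₂, h₃⟩ := hg e (x ≫ f) y (by simpa using h)
  obtain ⟨t, e₂, s₂, x', k₁, k₂, k₃⟩ := hf e₁ x y' h₁
  refine ⟨t, e₂, S.comp s₂ s₁, x', k₁, ?_, ?_⟩
  · rw [S.map_comp, reassoc_of% k₂, h₂]
  · rw [S.map_comp, reassoc_of% k₃, h₃, Category.assoc]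

theorem PathCat.IsOpen.of_isPullback {V : Type*} {M : Type*} [Category M] {J : V → M}
    {E S : PathCat V J} {P X Y Z : M} {p : P ⟶ X} {q : P ⟶ Z} {f : X ⟶ Y} {g : Z ⟶ Y}
    (sq : IsPullback p q f g) (hf : E.IsOpen S f) : E.IsOpen S q := by
  intro v w e x y h
  obtain ⟨u, e', s, x', h₁, h₂, h₃⟩ := hf e (x ≫ p) (y ≫ g) (by
    rw [reassoc_of% h, Category.assoc, sq.w])
  refine ⟨u, e', s, sq.lift x' (S.map s ≫ y) (by simpa using h₃), ?_, h₂, by simp⟩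
  apply sq.hom_ext
  · simpa using h₁
  · simp [reassoc_of% h₂, h]

/-- If the category of models has pullbacks, then `(𝔼,𝕊)`-bisimilarity is an
equivalence relation on the objects of `𝕄`. -/
theorem PathCat.bisimilar_equivalence {V : Type*} {M : Type*} [Category M]
    [Limits.HasPullbacks M] {J : V → M} (E S : PathCat V J) :
    Equivalence (E.Bisimilar S) := by
  refine ⟨fun X => ⟨X, 𝟙 X, 𝟙 X, E.isOpen_id S X, E.isOpen_id S X⟩, ?_, ?_⟩
  · rintro X Y ⟨Z, f, g, hf, hg⟩
    exact ⟨Z, g, f, hg, hf⟩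
  · rintro X Y W ⟨Z, f, g, hf, hg⟩ ⟨Z', f', g', hf', hg'⟩
    have sq := IsPullback.of_hasPullback g f'
    exact ⟨_, Limits.pullback.fst g f' ≫ f, Limits.pullback.snd g f' ≫ g',
      (hf'.of_isPullback sq.flip).comp hf, (hg.of_isPullback sq).comp hg'⟩
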